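/- arXiv:1509.08880 — 2 statements merged into one kernel-verified Lean document; each statement's English description precedes it below -/
import Mathlib

section
/- Let m ≥ 1, r ≥ 1, let v₁, …, v_r ∈ ℝ^m be vectors with ‖v_j‖₂ = 1 for every j, and let Λ > 0. Define for each σ ∈ {-1,1}^m the quantity F(σ) = sup over all u ∈ ℝ^r with u ≥ 0 componentwise and Σ_{j=1}^r u_j ≤ Λ of √( m · Σ_{j=1}^r u_j ⟨v_j, σ⟩² ). Then (1/m) · E_σ[F(σ)] ≥ √(Λ / (2m)). -/
/-!
Putting all the weight `Λ` on one index `j` gives `F(σ) ≥ √(mΛ) |⟨v_j, σ⟩|`, so the claim reduces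
to the `L¹`-`L²` Khintchine inequality with its sharp constant (Szarek):
`E |⟨v, σ⟩| ≥ 1/√2` for a unit vector `v`.

The proof of the latter is that of Latała and Oleszkiewicz. Let `f(σ) = |⟨v, σ⟩|` and let
`D f = ¼ ∑ᵢ E (f - f ∘ flipᵢ)²` be the Dirichlet form on the cube. Summing `⟨v, flipᵢ σ⟩` over `i`
gives `(m - 2) ⟨v, σ⟩`, so the triangle inequality yields `∑ᵢ f (flipᵢ σ) ≥ (m - 2) f σ`, whence
`D f ≤ E f²` (`khintchine_dirichlet_le`). On the other hand `D` has eigenvalue `|S|` on the Walsh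
function of `S`, and `f` is even, so it has no component with `|S| = 1`; hence
`D f ≥ 2 (E f² - (E f)²)`. In the form `D f ≥ 2 (E f² - (E f)²) - ∑ᵢ (E f σᵢ)²`, valid for every
`f` (`two_var_le_dirichlet`), this is proved by induction on the dimension. The two bounds combine
to `E f² ≤ 2 (E f)²`, and `E f² = ∑ᵢ vᵢ² = 1`.
-/

namespace Khintchine

/-- The sign in `{-1, 1}` encoded by a Boolean. -/
noncomputable def sgn (b : Bool) : ℝ := if b then 1 else -1

/-- The uniform average over the cube `{-1, 1}^m`, encoded as `Fin m → Bool`. -/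
noncomputable def ex {m : ℕ} (f : (Fin m → Bool) → ℝ) : ℝ := ((2 : ℝ) ^ m)⁻¹ * ∑ σ, f σ

/-- Flipping the `i`-th sign. -/
def flip {m : ℕ} (i : Fin m) (σ : Fin m → Bool) : Fin m → Bool := Function.update σ i (!σ i)

/-- The Dirichlet form on the cube, normalised so that the Walsh function of `S` has energy
`|S|`. -/
noncomputable def dir {m : ℕ} (f : (Fin m → Bool) → ℝ) : ℝ :=
  ∑ i, ex (fun σ => (f σ - f (flip i σ)) ^ 2) / 4

/-- The inner product of `v` with a sign vector. -/
noncomputable def ip {m : ℕ} (v : Fin m → ℝ) (σ : Fin m → Bool) : ℝ := ∑ i, v i * sgn (σ i)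

lemma ex_add {m : ℕ} (f g : (Fin m → Bool) → ℝ) :
    ex (fun σ => f σ + g σ) = ex f + ex g := by
  simp only [ex, Finset.sum_add_distrib]; ring

lemma ex_sub {m : ℕ} (f g : (Fin m → Bool) → ℝ) :
    ex (fun σ => f σ - g σ) = ex f - ex g := by
  simp only [ex, Finset.sum_sub_distrib]; ring

lemma ex_mul_left {m : ℕ} (c : ℝ) (f : (Fin m → Bool) → ℝ) :
    ex (fun σ => c * f σ) = c * ex f := by
  simp only [ex, ← Finset.mul_sum]; ring

lemma ex_const {m : ℕ} (c : ℝ) : ex (fun _ : Fin m → Bool => c) = c := by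
  simp [ex]

lemma ex_sum {m : ℕ} {ι : Type*} (s : Finset ι) (f : ι → (Fin m → Bool) → ℝ) :
    ex (fun σ => ∑ i ∈ s, f i σ) = ∑ i ∈ s, ex (f i) := by
  simp only [ex, ← Finset.mul_sum]; rw [Finset.sum_comm]

lemma ex_mono {m : ℕ} {f g : (Fin m → Bool) → ℝ} (h : ∀ σ, f σ ≤ g σ) : ex f ≤ ex g := by
  unfold ex
  exact mul_le_mul_of_nonneg_left (Finset.sum_le_sum fun σ _ => h σ) (by positivity)

lemma ex_nonneg {m : ℕ} {f : (Fin m → Bool) → ℝ} (h : ∀ σ, 0 ≤ f σ) : 0 ≤ ex f := by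
  have := ex_mono h
  rwa [ex_const] at this

lemma ex_involutive {m : ℕ} (e : (Fin m → Bool) → (Fin m → Bool)) (he : Function.Involutive e)
    (f : (Fin m → Bool) → ℝ) : ex (fun σ => f (e σ)) = ex f := by
  unfold ex
  exact congrArg _ (Equiv.sum_comp (he.toPerm e) f)

lemma flip_involutive {m : ℕ} (i : Fin m) : Function.Involutive (flip i) := by
  intro σ
  simp [flip]

lemma sq_ex_le {m : ℕ} (f : (Fin m → Bool) → ℝ) : ex f ^ 2 ≤ ex (fun σ => f σ ^ 2) := by
  have h : 0 ≤ ex (fun σ => (f σ - ex f) ^ 2) := ex_nonneg fun σ => sq_nonneg _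
  have h2 : ex (fun σ => (f σ - ex f) ^ 2)
      = ex (fun σ => f σ ^ 2) - 2 * ex f * ex f + ex f ^ 2 := by
    rw [← ex_mul_left, ← ex_const (m := m) (ex f ^ 2), ← ex_sub, ← ex_add]
    congr 1; funext σ; ring
  nlinarith

lemma ex_succ {m : ℕ} (f : (Fin (m + 1) → Bool) → ℝ) :
    ex f = (ex (fun τ => f (Fin.cons true τ)) + ex (fun τ => f (Fin.cons false τ))) / 2 := by
  have h : ∑ σ, f σ = ∑ τ, f (Fin.cons true τ) + ∑ τ, f (Fin.cons false τ) := by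
    rw [← Equiv.sum_comp (Fin.consEquiv fun _ : Fin (m + 1) => Bool) f, Fintype.sum_prod_type]
    simp [Fin.consEquiv]
  simp only [ex, h, pow_succ, mul_inv]
  ring

lemma flip_zero_cons {m : ℕ} (b : Bool) (τ : Fin m → Bool) :
    flip 0 (Fin.cons b τ : Fin (m + 1) → Bool) = Fin.cons (!b) τ := by
  simp [flip]

lemma flip_succ_cons {m : ℕ} (i : Fin m) (b : Bool) (τ : Fin m → Bool) :
    flip i.succ (Fin.cons b τ : Fin (m + 1) → Bool) = Fin.cons b (flip i τ) := by
  simp [flip, Fin.cons_update]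

lemma dir_succ {m : ℕ} (f : (Fin (m + 1) → Bool) → ℝ) :
    dir f = ex (fun τ => (f (Fin.cons true τ) - f (Fin.cons false τ)) ^ 2) / 4
      + (dir (fun τ => f (Fin.cons true τ)) + dir (fun τ => f (Fin.cons false τ))) / 2 := by
  unfold dir
  rw [Fin.sum_univ_succ, ← Finset.sum_add_distrib, Finset.sum_div]
  congr 1
  · rw [ex_succ]
    simp only [flip_zero_cons, Bool.not_true, Bool.not_false]
    have : ∀ τ : Fin m → Bool, (f (Fin.cons false τ) - f (Fin.cons true τ)) ^ 2
      = (f (Fin.cons true τ) - f (Fin.cons false τ)) ^ 2 := fun τ => by ring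
    simp only [this]
    ring
  · refine Finset.sum_congr rfl fun i _ => ?_
    rw [ex_succ]
    simp only [flip_succ_cons]
    ring

lemma ex_parallelogram {m : ℕ} (a b : (Fin m → Bool) → ℝ) :
    (ex (fun σ => a σ ^ 2) + ex (fun σ => b σ ^ 2)) / 2
      = ex (fun σ => ((a σ + b σ) / 2) ^ 2) + ex (fun σ => ((a σ - b σ) / 2) ^ 2) := by
  rw [← ex_add, ← ex_add, div_eq_inv_mul, ← ex_mul_left]
  congr 1; funext σ; ring

lemma dir_parallelogram {m : ℕ} (a b : (Fin m → Bool) → ℝ) :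
    (dir a + dir b) / 2
      = dir (fun σ => (a σ + b σ) / 2) + dir (fun σ => (a σ - b σ) / 2) := by
  unfold dir
  rw [← Finset.sum_add_distrib, ← Finset.sum_add_distrib, Finset.sum_div]
  refine Finset.sum_congr rfl fun i _ => ?_
  have h := ex_parallelogram (fun σ => a σ - a (flip i σ)) (fun σ => b σ - b (flip i σ))
  have h1 : ∀ σ, (a σ - a (flip i σ) + (b σ - b (flip i σ))) / 2
    = (a σ + b σ) / 2 - (a (flip i σ) + b (flip i σ)) / 2 := fun σ => by ring
  have h2 : ∀ σ, (a σ - a (flip i σ) - (b σ - b (flip i σ))) / 2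
    = (a σ - b σ) / 2 - (a (flip i σ) - b (flip i σ)) / 2 := fun σ => by ring
  simp only [h1, h2] at h
  linarith

lemma ex_half_sub {m : ℕ} (a b : (Fin m → Bool) → ℝ) :
    ex (fun σ => (a σ - b σ) / 2) = (ex a - ex b) / 2 := by
  rw [← ex_sub, div_eq_inv_mul, ← ex_mul_left]
  congr 1; funext σ; ring

lemma ex_half_add {m : ℕ} (a b : (Fin m → Bool) → ℝ) :
    ex (fun σ => (a σ + b σ) / 2) = (ex a + ex b) / 2 := by
  rw [← ex_add, div_eq_inv_mul, ← ex_mul_left]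
  congr 1; funext σ; ring

/-- The Poincaré inequality on the cube. -/
lemma var_le_dirichlet {m : ℕ} (f : (Fin m → Bool) → ℝ) :
    ex (fun σ => f σ ^ 2) - ex f ^ 2 ≤ dir f := by
  induction m with
  | zero => simp [ex, dir]
  | succ m ih =>
    rw [dir_succ, ex_succ, ex_succ f]
    have ha := ih (fun τ => f (Fin.cons true τ))
    have hb := ih (fun τ => f (Fin.cons false τ))
    have hs := sq_ex_le (fun τ => f (Fin.cons true τ) - f (Fin.cons false τ))
    rw [ex_sub] at hs
    nlinarith

/-- Spectrally, `2 - 2·[S = ∅] - [|S| = 1] ≤ |S|` for every set `S` of coordinates. In the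
induction step `f(x, τ) = g(τ) + x h(τ)`, the hypothesis is applied to `g` and the Poincaré
inequality to `h`. -/
lemma two_var_le_dirichlet {m : ℕ} (f : (Fin m → Bool) → ℝ) :
    2 * (ex (fun σ => f σ ^ 2) - ex f ^ 2) - ∑ i, ex (fun σ => f σ * sgn (σ i)) ^ 2 ≤ dir f := by
  induction m with
  | zero => simp [ex, dir]
  | succ m ih =>
    set a : (Fin m → Bool) → ℝ := fun τ => f (Fin.cons true τ) with ha
    set b : (Fin m → Bool) → ℝ := fun τ => f (Fin.cons false τ) with hb
    have hg := ih (fun τ => (a τ + b τ) / 2)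
    have hh := var_le_dirichlet (fun τ => (a τ - b τ) / 2)
    have hd : dir f = ex (fun τ => ((a τ - b τ) / 2) ^ 2) + (dir a + dir b) / 2 := by
      rw [dir_succ, div_eq_inv_mul, ← ex_mul_left]
      congr 2; funext τ; simp only [ha, hb]; ring
    have h0 : ex (fun σ => f σ * sgn (σ 0)) = ex (fun τ => (a τ - b τ) / 2) := by
      rw [ex_succ, ← ex_add, div_eq_inv_mul, ← ex_mul_left]
      congr 1; funext τ; simp [sgn, ha, hb]; ring
    have hi : ∀ i : Fin m, ex (fun σ => f σ * sgn (σ i.succ))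
        = ex (fun τ => (a τ + b τ) / 2 * sgn (τ i)) := by
      intro i
      rw [ex_succ, ← ex_add, div_eq_inv_mul, ← ex_mul_left]
      congr 1; funext τ; simp [ha, hb]; ring
    have h1 : ex f = ex (fun τ => (a τ + b τ) / 2) := by rw [ex_succ, ex_half_add]
    have h2 : ex (fun σ => f σ ^ 2) = (ex (fun τ => a τ ^ 2) + ex (fun τ => b τ ^ 2)) / 2 :=
      ex_succ _
    rw [Fin.sum_univ_succ, hd, h0, h1, h2, ex_parallelogram, dir_parallelogram]
    simp only [hi]
    linarith

lemma sgn_not (b : Bool) : sgn (!b) = -sgn b := by cases b <;> simp [sgn]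

lemma ip_not {m : ℕ} (v : Fin m → ℝ) (σ : Fin m → Bool) : ip v (fun i => !σ i) = -ip v σ := by
  simp [ip, sgn_not]

lemma ip_flip {m : ℕ} (v : Fin m → ℝ) (σ : Fin m → Bool) (i : Fin m) :
    ip v (flip i σ) = ip v σ - 2 * (v i * sgn (σ i)) := by
  have h : ∀ k, v k * sgn (flip i σ k)
      = v k * sgn (σ k) - if k = i then 2 * (v i * sgn (σ i)) else 0 := by
    intro k
    by_cases hk : k = i
    · subst hk; simp [flip, sgn_not]; ring
    · simp [flip, hk]
  simp [ip, h, Finset.sum_sub_distrib]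

lemma sum_ip_flip {m : ℕ} (v : Fin m → ℝ) (σ : Fin m → Bool) :
    ∑ i, ip v (flip i σ) = (m - 2) * ip v σ := by
  simp only [ip_flip, Finset.sum_sub_distrib, ← Finset.mul_sum]
  simp only [Finset.sum_const, Finset.card_univ, Fintype.card_fin, nsmul_eq_mul]
  rw [← ip]; ring

lemma sum_abs_ip_flip {m : ℕ} (v : Fin m → ℝ) (σ : Fin m → Bool) :
    (m - 2) * |ip v σ| ≤ ∑ i, |ip v (flip i σ)| := by
  refine le_trans ?_ (Finset.abs_sum_le_sum_abs _ _)
  rw [sum_ip_flip, abs_mul]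
  exact mul_le_mul_of_nonneg_right (le_abs_self _) (abs_nonneg _)

lemma khintchine_dirichlet_le {m : ℕ} (v : Fin m → ℝ) :
    dir (fun σ => |ip v σ|) ≤ ex (fun σ => |ip v σ| ^ 2) := by
  set f : (Fin m → Bool) → ℝ := fun σ => |ip v σ| with hf
  have h1 : ∀ i, ex (fun σ => (f σ - f (flip i σ)) ^ 2) / 4
      = ex (fun σ => 2⁻¹ * (f σ ^ 2 - f σ * f (flip i σ))) := by
    intro i
    have e1 : ex (fun σ => (f σ - f (flip i σ)) ^ 2)
        = ex (fun σ => f σ ^ 2) + ex (fun σ => f (flip i σ) ^ 2)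
          - 2 * ex (fun σ => f σ * f (flip i σ)) := by
      rw [← ex_add, ← ex_mul_left, ← ex_sub]
      congr 1; funext σ; ring
    rw [e1, ex_involutive (flip i) (flip_involutive i) (fun σ => f σ ^ 2), ex_mul_left, ex_sub]
    ring
  unfold dir
  simp only [h1]
  rw [← ex_sum]
  refine ex_mono fun σ => ?_
  rw [← Finset.mul_sum, Finset.sum_sub_distrib, ← Finset.mul_sum]
  simp only [Finset.sum_const, Finset.card_univ, Fintype.card_fin, nsmul_eq_mul]
  have h := mul_le_mul_of_nonneg_left (sum_abs_ip_flip v σ) (abs_nonneg (ip v σ))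
  simp only [hf]
  linarith

lemma ex_ip_sq {m : ℕ} (v : Fin m → ℝ) : ex (fun σ => ip v σ ^ 2) = ∑ i, v i ^ 2 := by
  induction m with
  | zero => simp [ex, ip]
  | succ m ih =>
    rw [ex_succ, Fin.sum_univ_succ, ← ih (fun i => v i.succ),
      ← ex_const (m := m) (v 0 ^ 2), ← ex_add, ← ex_add, div_eq_inv_mul, ← ex_mul_left]
    congr 1; funext τ
    simp [ip, Fin.sum_univ_succ, sgn]
    ring

lemma ex_abs_ip_mul_sgn {m : ℕ} (v : Fin m → ℝ) (i : Fin m) :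
    ex (fun σ => |ip v σ| * sgn (σ i)) = 0 := by
  have h := ex_involutive (fun (σ : Fin m → Bool) k => !σ k) (fun σ => by simp)
    (fun σ => |ip v σ| * sgn (σ i))
  simp only [ip_not, abs_neg, sgn_not, mul_neg] at h
  have h2 := ex_mul_left (-1) (fun σ => |ip v σ| * sgn (σ i))
  simp only [neg_one_mul] at h2
  linarith

/-- The `L¹`-`L²` Khintchine inequality with the sharp constant. -/
lemma khintchine {m : ℕ} (v : Fin m → ℝ) :
    ∑ i, v i ^ 2 ≤ 2 * ex (fun σ => |ip v σ|) ^ 2 := by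
  have h1 := khintchine_dirichlet_le v
  have h2 := two_var_le_dirichlet (fun σ => |ip v σ|)
  simp only [ex_abs_ip_mul_sgn, sq_abs, ex_ip_sq] at h1 h2
  simp at h2
  linarith

/-- The supremum dominates the value at the weight vector concentrated on `j`. The set is bounded
because every weight is at most `Λ`. -/
lemma le_sup {r : ℕ} (M Λ : ℝ) (hM : 0 ≤ M) (hΛ : 0 < Λ) (x : Fin r → ℝ) (j : Fin r) :
    Real.sqrt (M * Λ) * |x j| ≤
      sSup {t : ℝ | ∃ u : Fin r → ℝ, (∀ j, 0 ≤ u j) ∧ (∑ j, u j) ≤ Λ ∧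
        t = Real.sqrt (M * ∑ j, u j * x j ^ 2)} := by
  refine le_csSup ⟨Real.sqrt (M * ∑ j, Λ * x j ^ 2), ?_⟩ ?_
  · rintro t ⟨u, hu, hs, rfl⟩
    refine Real.sqrt_le_sqrt (mul_le_mul_of_nonneg_left (Finset.sum_le_sum fun k _ => ?_) hM)
    refine mul_le_mul_of_nonneg_right ?_ (sq_nonneg _)
    exact (Finset.single_le_sum (fun k _ => hu k) (Finset.mem_univ k)).trans hs
  · refine ⟨fun k => if k = j then Λ else 0, fun k => ?_, ?_, ?_⟩
    · dsimp only; split_ifs <;> linarith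
    · simp
    · simp only [ite_mul, zero_mul, Finset.sum_ite_eq', Finset.mem_univ, if_true]
      rw [← mul_assoc, Real.sqrt_mul (mul_nonneg hM hΛ.le) (x j ^ 2), Real.sqrt_sq_eq_abs]

end Khintchine

open Khintchine in
/-- Lower bound on the empirical Rademacher complexity of the paper's
hypothesis class (single-kernel construction): with unit vectors
`v₁, …, v_r ∈ ℝ^m` and
`F(σ) = sup { √(m · Σ_j u_j ⟨v_j, σ⟩²) : u ≥ 0, Σ_j u_j ≤ Λ }`,
one has `(1/m) E_σ[F(σ)] ≥ √(Λ/(2m))`. -/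
theorem stmt2 (m r : ℕ) (hm : 1 ≤ m) (hr : 1 ≤ r)
    (v : Fin r → Fin m → ℝ)
    (hv : ∀ j, Real.sqrt (∑ i, (v j i) ^ 2) = 1)
    (Λ : ℝ) (hΛ : 0 < Λ) :
    Real.sqrt (Λ / (2 * m)) ≤
      (1 / (m : ℝ)) *
        (((2 : ℝ) ^ m)⁻¹ *
          ∑ σ : Fin m → Bool,
            sSup {t : ℝ | ∃ u : Fin r → ℝ, (∀ j, 0 ≤ u j) ∧ (∑ j, u j) ≤ Λ ∧
              t = Real.sqrt ((m : ℝ) *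
                ∑ j, u j * (∑ i, v j i * (if σ i then (1 : ℝ) else -1)) ^ 2)}) := by
  have hm0 : (0 : ℝ) < m := by exact_mod_cast hm
  let j : Fin r := ⟨0, hr⟩
  have hk := khintchine (v j)
  rw [Real.sqrt_eq_one.mp (hv j)] at hk
  have hlow : Real.sqrt (m * Λ) * ex (fun σ => |ip (v j) σ|) ≤ ex (fun σ : Fin m → Bool =>
      sSup {t : ℝ | ∃ u : Fin r → ℝ, (∀ j, 0 ≤ u j) ∧ (∑ j, u j) ≤ Λ ∧
        t = Real.sqrt ((m : ℝ) * ∑ j, u j * ip (v j) σ ^ 2)}) := by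
    rw [← ex_mul_left]
    exact ex_mono fun σ => le_sup (m : ℝ) Λ hm0.le hΛ (fun j => ip (v j) σ) j
  have hE : 0 ≤ ex (fun σ => |ip (v j) σ|) := ex_nonneg fun σ => abs_nonneg _
  refine le_trans ?_ (mul_le_mul_of_nonneg_left hlow (by positivity))
  refine Real.sqrt_le_iff.mpr ⟨by positivity, ?_⟩
  rw [mul_pow, mul_pow, Real.sq_sqrt (by positivity)]
  have e : Λ / (2 * m) = (1 / (m : ℝ)) ^ 2 * (m * Λ * (1 / 2)) := by field_simp
  rw [e]
  gcongr
  linarith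
end

section
/- For every ε > 0, the 2×2 real matrices A = [[1+ε, 0], [0, 1]] and B = [[1, 0], [0, 1+ε]] satisfy: (i) the operator norm of A − B equals ε; (ii) the eigenvalues of A in nonincreasing order are 1+ε and 1, so λ₁(A) − λ₂(A) = ε; (iii) the orthogonal projection onto the top eigenspace of A is P_A = [[1,0],[0,0]] and that of B is P_B = [[0,0],[0,1]]; and (iv) the sum of the absolute values of the eigenvalues of P_A − P_B equals 2, hence equals 2‖A − B‖ / (λ₁(A) − λ₂(A)). -/
/-! Everything is a coordinate computation on diagonal matrices. Since `A - B = diag(ε, -ε)`, its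
operator norm is the largest absolute value of a diagonal entry, namely `ε`. A top eigenvector of `A`
must have vanishing second coordinate because the two diagonal entries differ by `ε ≠ 0`, so the top
eigenspace is the first coordinate axis; for `B` it is the second one. -/

open Polynomial Matrix

open scoped Matrix.Norms.L2Operator in
/-- The operator norm of `A - B = diag(ε, -ε)`, read off from the norm of a diagonal matrix. -/
theorem norm_sub_eq (ε : ℝ) (hε : 0 < ε) :
    ‖Matrix.toEuclideanCLM (𝕜 := ℝ) (!![1 + ε, 0; 0, 1] - !![1, 0; 0, 1 + ε])‖ = ε := by
  have hdiag : (!![1 + ε, 0; 0, 1] - !![1, 0; 0, 1 + ε] : Matrix (Fin 2) (Fin 2) ℝ)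
      = Matrix.diagonal ![ε, -ε] := by
    ext i j
    fin_cases i <;> fin_cases j <;> simp
  rw [hdiag, Matrix.l2_opNorm_toEuclideanCLM, Matrix.l2_opNorm_diagonal]
  apply le_antisymm
  · rw [pi_norm_le_iff_of_nonneg hε.le]
    intro i
    fin_cases i <;> simp [abs_of_pos hε]
  · simpa [abs_of_pos hε] using norm_le_pi_norm ![ε, -ε] 0

theorem range_fst_eq_eigenspace (ε : ℝ) (hε : 0 < ε) :
    LinearMap.range (Matrix.toLin' !![(1 : ℝ), 0; 0, 0])
      = Module.End.eigenspace (Matrix.toLin' !![1 + ε, 0; 0, (1 : ℝ)]) (1 + ε) := by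
  ext v
  rw [Module.End.mem_eigenspace_iff, LinearMap.mem_range]
  constructor
  · rintro ⟨w, rfl⟩
    ext i
    fin_cases i <;> simp [Matrix.toLin'_apply, Matrix.mulVec, dotProduct, Fin.sum_univ_two]
  · intro h
    have h1 : v 1 = (1 + ε) * v 1 := by
      simpa [Matrix.toLin'_apply, Matrix.mulVec, dotProduct, Fin.sum_univ_two] using congrFun h 1
    have h2 : v 1 = 0 := by
      have : ε * v 1 = 0 := by linarith
      exact (mul_eq_zero.mp this).resolve_left hε.ne'
    refine ⟨v, ?_⟩
    ext i
    fin_cases i <;> simp [Matrix.toLin'_apply, Matrix.mulVec, dotProduct, Fin.sum_univ_two, h2]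

theorem range_snd_eq_eigenspace (ε : ℝ) (hε : 0 < ε) :
    LinearMap.range (Matrix.toLin' !![(0 : ℝ), 0; 0, 1])
      = Module.End.eigenspace (Matrix.toLin' !![(1 : ℝ), 0; 0, 1 + ε]) (1 + ε) := by
  ext v
  rw [Module.End.mem_eigenspace_iff, LinearMap.mem_range]
  constructor
  · rintro ⟨w, rfl⟩
    ext i
    fin_cases i <;> simp [Matrix.toLin'_apply, Matrix.mulVec, dotProduct, Fin.sum_univ_two]
  · intro h
    have h1 : v 0 = (1 + ε) * v 0 := by
      simpa [Matrix.toLin'_apply, Matrix.mulVec, dotProduct, Fin.sum_univ_two] using congrFun h 0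
    have h2 : v 0 = 0 := by
      have : ε * v 0 = 0 := by linarith
      exact (mul_eq_zero.mp this).resolve_left hε.ne'
    refine ⟨v, ?_⟩
    ext i
    fin_cases i <;> simp [Matrix.toLin'_apply, Matrix.mulVec, dotProduct, Fin.sum_univ_two, h2]

/-- Tightness of the eigengap dependence in eigenspace perturbation: for
`A = [[1+ε,0],[0,1]]`, `B = [[1,0],[0,1+ε]]`:
(i) the operator norm of `A − B` is `ε`;
(ii) the eigenvalues of `A` in nonincreasing order are `1+ε` and `1`, so the
eigengap is `ε`;
(iii) the orthogonal projections onto the top eigenspaces of `A` and `B` are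
`P_A = [[1,0],[0,0]]` and `P_B = [[0,0],[0,1]]` (symmetric idempotents whose
range is the corresponding top eigenspace);
(iv) the sum of absolute values of the eigenvalues of `P_A − P_B` is `2`,
which equals `2‖A − B‖ / (λ₁(A) − λ₂(A))`. -/
theorem stmt10 (ε : ℝ) (hε : 0 < ε) :
    ‖Matrix.toEuclideanCLM (𝕜 := ℝ) (!![1 + ε, 0; 0, 1] - !![1, 0; 0, 1 + ε])‖ = ε ∧
    ((!![1 + ε, 0; 0, (1 : ℝ)]).charpoly = (X - C (1 + ε)) * (X - C 1) ∧
      (1 + ε) - 1 = ε) ∧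
    ((!![(1 : ℝ), 0; 0, 0]).IsSymm ∧
      !![(1 : ℝ), 0; 0, 0] * !![(1 : ℝ), 0; 0, 0] = !![(1 : ℝ), 0; 0, 0] ∧
      LinearMap.range (Matrix.toLin' !![(1 : ℝ), 0; 0, 0])
        = Module.End.eigenspace (Matrix.toLin' !![1 + ε, 0; 0, (1 : ℝ)]) (1 + ε)) ∧
    ((!![(0 : ℝ), 0; 0, 1]).IsSymm ∧
      !![(0 : ℝ), 0; 0, 1] * !![(0 : ℝ), 0; 0, 1] = !![(0 : ℝ), 0; 0, 1] ∧
      LinearMap.range (Matrix.toLin' !![(0 : ℝ), 0; 0, 1])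
        = Module.End.eigenspace (Matrix.toLin' !![(1 : ℝ), 0; 0, 1 + ε]) (1 + ε)) ∧
    ((!![(1 : ℝ), 0; 0, 0] - !![(0 : ℝ), 0; 0, 1]).charpoly
        = (X - C 1) * (X - C (-1)) ∧
      |(1 : ℝ)| + |(-1 : ℝ)| = 2 ∧
      (2 : ℝ) = 2 * ‖Matrix.toEuclideanCLM (𝕜 := ℝ)
          (!![1 + ε, 0; 0, 1] - !![1, 0; 0, 1 + ε])‖ / ((1 + ε) - 1)) := by
  refine ⟨norm_sub_eq ε hε, ⟨?_, by ring⟩,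
    ⟨?_, ?_, range_fst_eq_eigenspace ε hε⟩, ⟨?_, ?_, range_snd_eq_eigenspace ε hε⟩, ?_, ?_, ?_⟩
  · simp [Matrix.charpoly, Matrix.charmatrix, Matrix.det_fin_two]
  · ext i j
    fin_cases i <;> fin_cases j <;> simp
  · ext i j
    fin_cases i <;> fin_cases j <;> simp
  · ext i j
    fin_cases i <;> fin_cases j <;> simp
  · ext i j
    fin_cases i <;> fin_cases j <;> simp
  · simp [Matrix.charpoly, Matrix.charmatrix, Matrix.det_fin_two]
  · norm_num
  · rw [norm_sub_eq ε hε, add_sub_cancel_left, mul_div_assoc, div_self hε.ne', mul_one]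
end
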